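/- arXiv:2104.11910 — 2 statements merged into one kernel-verified Lean document; each statement's English description precedes it below -/
import Mathlib

section
/- For every finite simple graph G on n vertices and every k ≥ 1, ϑ_k(G) ≤ ϑ_{k+1}(G); moreover, equality ϑ_k(G) = ϑ_{k+1}(G) holds if and only if ϑ_k(G) = n. -/
open Finset

/-- The sum of the `k` largest eigenvalues (counted with multiplicity) of a
Hermitian real matrix, realized as the supremum over all choices of
`min k n` eigenvalues of their sum. -/
noncomputable def sumKEig {V : Type*} [Fintype V] [DecidableEq V] (k : ℕ)
    (A : Matrix V V ℝ) (hA : A.IsHermitian) : ℝ :=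
  sSup {x : ℝ | ∃ s : Finset V, s.card = min k (Fintype.card V) ∧
    x = ∑ i ∈ s, hA.eigenvalues i}

/-- The generalized theta number `ϑ_k(G)`: the infimum of the sum of the `k`
largest eigenvalues over all real symmetric matrices `A` with `A i j = 1`
whenever `(i,j)` is not an edge of `G`. -/
noncomputable def gtheta {V : Type*} [Fintype V] [DecidableEq V]
    (k : ℕ) (G : SimpleGraph V) : ℝ :=
  sInf {x : ℝ | ∃ (A : Matrix V V ℝ) (hA : A.IsHermitian),
    (∀ i j, ¬ G.Adj i j → A i j = 1) ∧ x = sumKEig k A hA}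

section aux

variable {V : Type*} [Fintype V] [DecidableEq V]

lemma sumK_set_finite (k : ℕ) (A : Matrix V V ℝ) (hA : A.IsHermitian) :
    {x : ℝ | ∃ s : Finset V, s.card = min k (Fintype.card V) ∧
      x = ∑ i ∈ s, hA.eigenvalues i}.Finite := by
  refine (Set.finite_range (fun s : Finset V => ∑ i ∈ s, hA.eigenvalues i)).subset ?_
  rintro x ⟨s, -, rfl⟩
  exact ⟨s, rfl⟩

lemma sumK_attained (k : ℕ) (A : Matrix V V ℝ) (hA : A.IsHermitian) :
    ∃ s : Finset V, s.card = min k (Fintype.card V) ∧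
      sumKEig k A hA = ∑ i ∈ s, hA.eigenvalues i := by
  have hne : {x : ℝ | ∃ s : Finset V, s.card = min k (Fintype.card V) ∧
      x = ∑ i ∈ s, hA.eigenvalues i}.Nonempty := by
    obtain ⟨s, -, hs⟩ := Finset.exists_subset_card_eq
      (s := (Finset.univ : Finset V)) (n := min k (Fintype.card V))
      (by rw [Finset.card_univ]; exact min_le_right _ _)
    exact ⟨_, s, hs, rfl⟩
  exact hne.csSup_mem (sumK_set_finite k A hA)

lemma le_sumK (k : ℕ) (A : Matrix V V ℝ) (hA : A.IsHermitian) (s : Finset V)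
    (hs : s.card = min k (Fintype.card V)) :
    ∑ i ∈ s, hA.eigenvalues i ≤ sumKEig k A hA :=
  le_csSup (sumK_set_finite k A hA).bddAbove ⟨s, hs, rfl⟩

lemma sum_eig (G : SimpleGraph V) (A : Matrix V V ℝ) (hA : A.IsHermitian)
    (h : ∀ i j, ¬ G.Adj i j → A i j = 1) :
    ∑ i, hA.eigenvalues i = (Fintype.card V : ℝ) := by
  have h1 := hA.trace_eq_sum_eigenvalues
  have h2 : A.trace = (Fintype.card V : ℝ) := by
    simp [Matrix.trace, h _ _ (G.irrefl)]
  rw [← h2, h1]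
  simp

lemma sumK_large (G : SimpleGraph V) (A : Matrix V V ℝ) (hA : A.IsHermitian)
    (h : ∀ i j, ¬ G.Adj i j → A i j = 1) (k : ℕ) (hk : Fintype.card V ≤ k) :
    sumKEig k A hA = (Fintype.card V : ℝ) := by
  obtain ⟨s, hs, he⟩ := sumK_attained k A hA
  rw [min_eq_right hk] at hs
  rw [he, (Finset.card_eq_iff_eq_univ s).1 hs, sum_eig G A hA h]

/-- Concavity of the partial sums of the sorted eigenvalues. -/
lemma sumK_step (G : SimpleGraph V) (A : Matrix V V ℝ) (hA : A.IsHermitian)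
    (h : ∀ i j, ¬ G.Adj i j → A i j = 1) (k : ℕ) (hk : k < Fintype.card V) :
    (Fintype.card V : ℝ) + ((Fintype.card V : ℝ) - k - 1) * sumKEig k A hA ≤
      ((Fintype.card V : ℝ) - k) * sumKEig (k + 1) A hA := by
  obtain ⟨s, hs, he⟩ := sumK_attained k A hA
  rw [min_eq_left hk.le] at hs
  have h1 : ∀ j ∈ sᶜ, sumKEig k A hA + hA.eigenvalues j ≤ sumKEig (k + 1) A hA := by
    intro j hj
    have hj' : j ∉ s := by simpa using hj
    have := le_sumK (k + 1) A hA (insert j s) (by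
      rw [Finset.card_insert_of_notMem hj', hs, min_eq_left hk])
    rw [Finset.sum_insert hj'] at this
    linarith
  have h2 := Finset.sum_le_sum h1
  have hc : ((sᶜ).card : ℝ) = (Fintype.card V : ℝ) - k := by
    rw [Finset.card_compl, hs, Nat.cast_sub hk.le]
  have h3 := Finset.sum_add_sum_compl s hA.eigenvalues
  rw [sum_eig G A hA h, ← he] at h3
  rw [Finset.sum_add_distrib, Finset.sum_const, Finset.sum_const, nsmul_eq_mul, nsmul_eq_mul,
    hc] at h2
  linarith

lemma sumK_nonneg (G : SimpleGraph V) (A : Matrix V V ℝ) (hA : A.IsHermitian)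
    (h : ∀ i j, ¬ G.Adj i j → A i j = 1) (k : ℕ) : 0 ≤ sumKEig k A hA := by
  induction k with
  | zero =>
    have := le_sumK 0 A hA ∅ (by simp)
    simpa using this
  | succ k ih =>
    rcases lt_or_ge k (Fintype.card V) with hk | hk
    · have h1 := sumK_step G A hA h k hk
      have h2 : ((k : ℝ) + 1) ≤ Fintype.card V := by exact_mod_cast hk
      have h3 : 0 ≤ ((Fintype.card V : ℝ) - k - 1) * sumKEig k A hA :=
        mul_nonneg (by linarith) ih
      by_contra hneg
      push Not at hneg
      have h4 : ((Fintype.card V : ℝ) - k) * sumKEig (k + 1) A hA < 0 :=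
        mul_neg_of_pos_of_neg (by linarith) hneg
      have : (0 : ℝ) ≤ Fintype.card V := Nat.cast_nonneg _
      linarith
    · rw [sumK_large G A hA h (k + 1) (by omega)]
      positivity

lemma gtheta_le (G : SimpleGraph V) (A : Matrix V V ℝ) (hA : A.IsHermitian)
    (h : ∀ i j, ¬ G.Adj i j → A i j = 1) (k : ℕ) : gtheta k G ≤ sumKEig k A hA := by
  refine csInf_le ⟨0, ?_⟩ ⟨A, hA, h, rfl⟩
  rintro x ⟨B, hB, h', rfl⟩
  exact sumK_nonneg G B hB h' k

lemma ones_psd : (Matrix.of fun _ _ : V => (1 : ℝ)).PosSemidef := by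
  have := Matrix.posSemidef_vecMulVec_self_star (fun _ : V => (1 : ℝ))
  convert this using 1
  ext i j
  simp [Matrix.vecMulVec]

lemma le_gtheta (G : SimpleGraph V) (k : ℕ) (c : ℝ)
    (hc : ∀ (A : Matrix V V ℝ) (hA : A.IsHermitian), (∀ i j, ¬ G.Adj i j → A i j = 1) →
      c ≤ sumKEig k A hA) : c ≤ gtheta k G := by
  refine le_csInf ⟨_, _, ones_psd.isHermitian, fun _ _ _ => rfl, rfl⟩ ?_
  rintro x ⟨B, hB, h', rfl⟩
  exact hc B hB h'

lemma gtheta_le_card (G : SimpleGraph V) (k : ℕ) : gtheta k G ≤ Fintype.card V := by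
  have hJ := (ones_psd (V := V))
  refine (gtheta_le G _ hJ.isHermitian (fun _ _ _ => rfl) k).trans ?_
  obtain ⟨s, hs, he⟩ := sumK_attained k _ hJ.isHermitian
  rw [he, ← sum_eig G _ hJ.isHermitian (fun _ _ _ => rfl)]
  exact Finset.sum_le_sum_of_subset_of_nonneg (Finset.subset_univ s)
    (fun i _ _ => hJ.eigenvalues_nonneg i)

lemma gtheta_large (G : SimpleGraph V) (k : ℕ) (hk : Fintype.card V ≤ k) :
    gtheta k G = Fintype.card V :=
  le_antisymm (gtheta_le_card G k)
    (le_gtheta G k _ fun A hA h => (sumK_large G A hA h k hk).ge)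

lemma gtheta_mono (G : SimpleGraph V) (k : ℕ) : gtheta k G ≤ gtheta (k + 1) G := by
  rcases lt_or_ge k (Fintype.card V) with hk | hk
  · refine le_gtheta G _ _ fun A hA h => ?_
    have h1 := sumK_step G A hA h k hk
    have h2 : ((k : ℝ) + 1) ≤ Fintype.card V := by exact_mod_cast hk
    have h3 := gtheta_le G A hA h k
    have h4 := gtheta_le_card G k
    by_contra hlt
    push Not at hlt
    nlinarith [mul_nonneg (show (0 : ℝ) ≤ (Fintype.card V : ℝ) - k - 1 by linarith)
      (sub_nonneg.2 (hlt.le.trans h3))]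
  · rw [gtheta_large G k hk, gtheta_large G (k + 1) (by omega)]

end aux

theorem stmt_1 {V : Type*} [Fintype V] [DecidableEq V] (G : SimpleGraph V)
    (n : ℕ) (hn : Fintype.card V = n) (k : ℕ) (hk : 1 ≤ k) :
    gtheta k G ≤ gtheta (k + 1) G ∧
    (gtheta k G = gtheta (k + 1) G ↔ gtheta k G = (n : ℝ)) := by
  subst hn
  refine ⟨gtheta_mono G k, fun heq => ?_, fun h => ?_⟩
  · rcases lt_or_ge k (Fintype.card V) with hk | hk
    · refine le_antisymm (gtheta_le_card G k) ?_
      have h2 : ((k : ℝ) + 1) ≤ Fintype.card V := by exact_mod_cast hk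
      have hpos : (0 : ℝ) < (Fintype.card V : ℝ) - k := by linarith
      have key : ((Fintype.card V : ℝ) + ((Fintype.card V : ℝ) - k - 1) * gtheta k G) /
          ((Fintype.card V : ℝ) - k) ≤ gtheta (k + 1) G := by
        refine le_gtheta G _ _ fun A hA h => ?_
        rw [div_le_iff₀ hpos]
        have h1 := sumK_step G A hA h k hk
        have h3 := mul_le_mul_of_nonneg_left (gtheta_le G A hA h k)
          (show (0 : ℝ) ≤ (Fintype.card V : ℝ) - k - 1 by linarith)
        linarith
      rw [← heq, div_le_iff₀ hpos] at key
      linarith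
    · exact gtheta_large G k hk
  · have h1 := gtheta_mono G k
    have h2 := gtheta_le_card G (k + 1)
    linarith
end

section
/- Let n be odd with n > 1, and let C_n be the cycle graph on n vertices. Then ϑ_2(C_n) = 2·ϑ(C_n), and ϑ_k(C_n) = n for every k ≥ 3. -/
open Finset

open Matrix in
lemma exists_top {V : Type*} [Fintype V] [DecidableEq V] (k : ℕ) (hk : 1 ≤ k)
    (hkV : k ≤ Fintype.card V) (l w : V → ℝ) (h0 : ∀ i, 0 ≤ w i) (h1 : ∀ i, w i ≤ 1)
    (hw : ∑ i, w i = k) :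
    ∃ s : Finset V, s.card = k ∧ ∑ i, l i * w i ≤ ∑ i ∈ s, l i := by
  classical
  have hne : (Finset.powersetCard k (Finset.univ : Finset V)).Nonempty :=
    Finset.powersetCard_nonempty.2 (by simpa using hkV)
  obtain ⟨s, hs, hmax⟩ := Finset.exists_max_image _ (fun s => ∑ i ∈ s, l i) hne
  have hcard : s.card = k := (Finset.mem_powersetCard.1 hs).2
  have hswap : ∀ i ∈ s, ∀ j ∉ s, l j ≤ l i := by
    intro i hi j hj
    have hj' : j ∉ s.erase i := fun h => hj (Finset.mem_of_mem_erase h)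
    have := hmax (insert j (s.erase i)) (by
      rw [Finset.mem_powersetCard]
      refine ⟨Finset.subset_univ _, ?_⟩
      rw [Finset.card_insert_of_notMem hj', Finset.card_erase_of_mem hi]
      omega)
    beta_reduce at this
    rw [Finset.sum_insert hj'] at this
    have h2 := Finset.add_sum_erase s l hi
    linarith
  have hsne : s.Nonempty := Finset.card_pos.1 (by omega)
  obtain ⟨i0, hi0, hmin⟩ := Finset.exists_min_image s l hsne
  refine ⟨s, hcard, ?_⟩
  have e : ∑ i, (l i * w i - l i0 * w i) ≤ ∑ i, (if i ∈ s then (l i - l i0) else 0) := by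
    apply Finset.sum_le_sum
    intro i _
    split_ifs with h
    · nlinarith [hmin i h, h0 i, h1 i]
    · nlinarith [hswap i0 hi0 i h, h0 i, h1 i]
  rw [Finset.sum_sub_distrib, ← Finset.mul_sum, hw, Finset.sum_ite_mem, Finset.univ_inter,
    Finset.sum_sub_distrib, Finset.sum_const, hcard, nsmul_eq_mul] at e
  linarith

lemma le_sumKEig {V : Type*} [Fintype V] [DecidableEq V] (k : ℕ)
    (A : Matrix V V ℝ) (hA : A.IsHermitian) (s : Finset V)
    (hs : s.card = min k (Fintype.card V)) :
    ∑ i ∈ s, hA.eigenvalues i ≤ sumKEig k A hA := by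
  refine le_csSup ?_ ⟨s, hs, rfl⟩
  refine Set.Finite.bddAbove ?_
  refine (Set.finite_range (fun s : Finset V => ∑ i ∈ s, hA.eigenvalues i)).subset ?_
  rintro x ⟨s, -, rfl⟩
  exact ⟨s, rfl⟩

lemma sumKEig_le {V : Type*} [Fintype V] [DecidableEq V] (k : ℕ)
    (A : Matrix V V ℝ) (hA : A.IsHermitian) (B : ℝ)
    (h : ∀ s : Finset V, s.card = min k (Fintype.card V) → ∑ i ∈ s, hA.eigenvalues i ≤ B) :
    sumKEig k A hA ≤ B := by
  refine csSup_le ?_ ?_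
  · obtain ⟨s, hs⟩ := Finset.exists_subset_card_eq (s := (Finset.univ : Finset V))
      (n := min k (Fintype.card V)) (by simp)
    exact ⟨_, s, hs.2, rfl⟩
  · rintro x ⟨s, hs, rfl⟩
    exact h s hs

open Matrix in
lemma trace_le_sumKEig {V : Type*} [Fintype V] [DecidableEq V] (k : ℕ) (hk : 1 ≤ k)
    (A : Matrix V V ℝ) (hA : A.IsHermitian) (hV : 1 ≤ Fintype.card V) (X : Matrix V V ℝ)
    (h0 : ∀ v : V → ℝ, 0 ≤ v ⬝ᵥ X *ᵥ v) (h1 : ∀ v : V → ℝ, v ⬝ᵥ X *ᵥ v ≤ v ⬝ᵥ v)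
    (ht : X.trace = (min k (Fintype.card V) : ℕ)) :
    (A * X).trace ≤ sumKEig k A hA := by
  set U : Matrix V V ℝ := (hA.eigenvectorUnitary : Matrix V V ℝ) with hU
  have hUU : Uᵀ * U = 1 := by
    have := Unitary.coe_star_mul_self hA.eigenvectorUnitary
    simpa [star_eq_conjTranspose] using this
  have hUU' : U * Uᵀ = 1 := by
    have := Unitary.coe_mul_star_self hA.eigenvectorUnitary
    simpa [star_eq_conjTranspose] using this
  have hspec : A = U * diagonal hA.eigenvalues * Uᵀ := by
    have := hA.spectral_theorem
    rw [Unitary.conjStarAlgAut_apply] at this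
    simpa [star_eq_conjTranspose, Function.comp_def] using this
  set Y := Uᵀ * X * U with hY
  have hYd : ∀ i, Y i i = (fun a => U a i) ⬝ᵥ X *ᵥ (fun a => U a i) := by
    intro i
    rw [hY, Matrix.mul_assoc, Matrix.mul_apply]
    rfl
  have hunit : ∀ i, (fun a => U a i) ⬝ᵥ (fun a => U a i) = 1 := by
    intro i
    have := congrFun (congrFun hUU i) i
    rw [Matrix.mul_apply] at this
    simpa [dotProduct] using this
  obtain ⟨s, hs, hle⟩ := exists_top (min k (Fintype.card V)) (by omega) (by omega)
    hA.eigenvalues (fun i => Y i i) (fun i => by rw [hYd]; exact h0 _)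
    (fun i => by rw [hYd, ← hunit i]; exact h1 _) (by
      rw [← ht]
      change Y.trace = _
      rw [hY, Matrix.trace_mul_comm, ← Matrix.mul_assoc, hUU', Matrix.one_mul])
  refine le_trans ?_ (le_sumKEig k A hA s hs)
  refine le_trans (le_of_eq ?_) hle
  conv_lhs => rw [hspec]
  rw [Matrix.mul_assoc, Matrix.mul_assoc, Matrix.trace_mul_comm, Matrix.mul_assoc, ← hY]
  simp [Matrix.trace, Matrix.diagonal_mul]

open Matrix in
lemma eig_eq {V : Type*} [Fintype V] [DecidableEq V] 
    (A : Matrix V V ℝ) (hA : A.IsHermitian) (i : V) :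
    ∃ v : V → ℝ, v ⬝ᵥ v = 1 ∧ hA.eigenvalues i = v ⬝ᵥ A *ᵥ v := by
  refine ⟨(hA.eigenvectorBasis i).ofLp, ?_, ?_⟩
  · have := hA.eigenvectorBasis.orthonormal.1 i
    rw [EuclideanSpace.norm_eq, Real.sqrt_eq_one] at this
    simpa [dotProduct, sq] using this
  · simpa using hA.eigenvalues_eq i

lemma cos_sum_aux (n : ℕ) (hn : 0 < n) (d : ℤ) (φ : ℝ) :
    ∑ j ∈ Finset.range n, Real.cos (2 * Real.pi * j * d / n + φ) =
      if (n : ℤ) ∣ d then n * Real.cos φ else 0 := by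
  have hn0 : (n : ℝ) ≠ 0 := by positivity
  have hnc : (n : ℂ) ≠ 0 := by exact_mod_cast hn.ne'
  set ζ : ℂ := Complex.exp (2 * Real.pi * Complex.I * (d / n)) with hζ
  have hterm : ∀ j : ℕ, Real.cos (2 * Real.pi * j * d / n + φ) =
      (ζ ^ j * Complex.exp (φ * Complex.I)).re := by
    intro j
    rw [hζ, ← Complex.exp_nat_mul, ← Complex.exp_add, ← Complex.exp_ofReal_mul_I_re]
    congr 2
    push_cast
    ring
  rw [Finset.sum_congr rfl (fun j _ => hterm j), ← Complex.re_sum, ← Finset.sum_mul]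
  have hpow : ζ ^ n = 1 := by
    rw [hζ, ← Complex.exp_nat_mul, Complex.exp_eq_one_iff]
    refine ⟨d, ?_⟩
    field_simp
  have h1 : ζ = 1 ↔ (n : ℤ) ∣ d := by
    rw [hζ, Complex.exp_eq_one_iff]
    have h2pi : (2 * Real.pi * Complex.I : ℂ) ≠ 0 := Complex.two_pi_I_ne_zero
    constructor
    · rintro ⟨k, hk⟩
      refine ⟨k, ?_⟩
      have : (d / n : ℂ) = k := by
        apply mul_left_cancel₀ h2pi
        rw [hk]; ring
      rw [div_eq_iff hnc] at this
      have h3 : (d : ℂ) = ((n * k : ℤ) : ℂ) := by push_cast; rw [this]; ring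
      exact_mod_cast h3
    · rintro ⟨k, hk⟩
      refine ⟨k, ?_⟩
      rw [hk]; push_cast; field_simp
  split_ifs with h
  · rw [h1.2 h]
    simp [Complex.exp_ofReal_mul_I_re]
  · have hne : ζ - 1 ≠ 0 := sub_ne_zero.2 (fun e => h (h1.1 e))
    have := mul_geom_sum ζ n
    rw [hpow, sub_self] at this
    rw [(mul_eq_zero.1 this).resolve_left hne]
    simp

/-- The circulant matrix with eigenvalues `x j`. -/
noncomputable def circ (n : ℕ) (x : ℕ → ℝ) : Matrix (Fin n) (Fin n) ℝ :=
  Matrix.of fun a b => (1 / (n : ℝ)) * ∑ j ∈ Finset.range n,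
    x j * Real.cos (2 * Real.pi * j * (((a : ℕ) : ℤ) - ((b : ℕ) : ℤ) : ℤ) / n)

lemma circ_apply (n : ℕ) (x : ℕ → ℝ) (a b : Fin n) : circ n x a b =
    (1 / (n : ℝ)) * ∑ j ∈ Finset.range n,
    x j * Real.cos (2 * Real.pi * j * (((a : ℕ) : ℤ) - ((b : ℕ) : ℤ) : ℤ) / n) := rfl

lemma circ_herm (n : ℕ) (x : ℕ → ℝ) : (circ n x).IsHermitian := by
  ext a b
  simp only [Matrix.conjTranspose_apply, star_trivial, circ_apply]
  congr 1
  refine Finset.sum_congr rfl fun j _ => ?_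
  rw [← Real.cos_neg]
  congr 2
  push_cast
  ring

lemma dvd_val_sub (n : ℕ) (a b : Fin n) :
    ((n : ℤ) ∣ ((a : ℕ) : ℤ) - ((b : ℕ) : ℤ)) ↔ a = b := by
  constructor
  · intro h
    have := Int.eq_zero_of_abs_lt_dvd h (by rw [abs_lt]; omega)
    ext; omega
  · rintro rfl; simp

lemma circ_one (n : ℕ) (hn : 0 < n) : circ n (fun _ => 1) = 1 := by
  have hn0 : (n : ℝ) ≠ 0 := by positivity
  ext a b
  have := cos_sum_aux n hn (((a : ℕ) : ℤ) - ((b : ℕ) : ℤ)) 0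
  simp only [add_zero, Real.cos_zero, dvd_val_sub] at this
  simp only [circ_apply, one_mul, this, Matrix.one_apply]
  split_ifs <;> simp [hn0]

lemma circ_trace (n : ℕ) (hn : 0 < n) (x : ℕ → ℝ) :
    (circ n x).trace = ∑ j ∈ Finset.range n, x j := by
  have hn0 : (n : ℝ) ≠ 0 := by positivity
  simp [Matrix.trace, circ_apply, hn0]

lemma circ_sum (n : ℕ) (hn : 0 < n) (x : ℕ → ℝ) :
    ∑ a, ∑ b, circ n x a b = n * x 0 := by
  have hn0 : (n : ℝ) ≠ 0 := by positivity
  have key : ∀ j ∈ Finset.range n, ∀ b : Fin n, ∑ a : Fin n,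
      Real.cos (2 * Real.pi * j * (((a : ℕ) : ℤ) - ((b : ℕ) : ℤ) : ℤ) / n) =
      if j = 0 then (n : ℝ) else 0 := by
    intro j hj b
    have hj' := Finset.mem_range.1 hj
    have := cos_sum_aux n hn (j : ℤ) (-(2 * Real.pi * j * (b : ℕ) / n))
    have e : ((n : ℤ) ∣ (j : ℤ)) ↔ j = 0 := by
      rw [Int.natCast_dvd_natCast]
      constructor
      · intro h; exact Nat.eq_zero_of_dvd_of_lt h hj'
      · rintro rfl; simp
    rw [Finset.sum_range] at this
    simp only [e] at this
    rw [show (if j = 0 then (n : ℝ) else 0) = if j = 0 then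
      (n : ℝ) * Real.cos (-(2 * Real.pi * j * (b : ℕ) / n)) else 0 by
        split_ifs with h <;> simp [h], ← this]
    refine Finset.sum_congr rfl fun a _ => ?_
    congr 1
    push_cast
    ring
  simp only [circ_apply]
  rw [Finset.sum_comm]
  simp only [← Finset.mul_sum]
  have : ∀ b : Fin n, ∑ a : Fin n, ∑ j ∈ Finset.range n, x j *
      Real.cos (2 * Real.pi * j * (((a : ℕ) : ℤ) - ((b : ℕ) : ℤ) : ℤ) / n) = n * x 0 := by
    intro b
    rw [Finset.sum_comm]
    rw [Finset.sum_congr rfl (fun j hj => by rw [← Finset.mul_sum, key j hj b])]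
    simp [hn.ne', mul_comm]
  simp only [this]
  simp
  field_simp

open Matrix in
lemma circ_quad (n : ℕ) (x : ℕ → ℝ) (hx : ∀ j < n, 0 ≤ x j) (v : Fin n → ℝ) :
    0 ≤ v ⬝ᵥ circ n x *ᵥ v := by
  have : v ⬝ᵥ circ n x *ᵥ v = (1 / (n : ℝ)) * ∑ j ∈ Finset.range n, x j *
      ((∑ a, v a * Real.cos (2 * Real.pi * j * (a : ℕ) / n)) ^ 2 +
       (∑ a, v a * Real.sin (2 * Real.pi * j * (a : ℕ) / n)) ^ 2) := by
    simp only [dotProduct, mulVec, circ_apply, sq, Finset.mul_sum,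
      Finset.sum_mul, ← Finset.sum_add_distrib]
    conv_rhs => rw [Finset.sum_comm]
    refine Finset.sum_congr rfl fun a _ => ?_
    conv_rhs => rw [Finset.sum_comm]
    refine Finset.sum_congr rfl fun b _ => ?_
    refine Finset.sum_congr rfl fun j _ => ?_
    have : (2 * Real.pi * j * (((a : ℕ) : ℤ) - ((b : ℕ) : ℤ) : ℤ) / n : ℝ) =
      2 * Real.pi * j * (a : ℕ) / n - 2 * Real.pi * j * (b : ℕ) / n := by
      push_cast; ring
    rw [this, Real.cos_sub]
    ring
  rw [this]
  refine mul_nonneg (by positivity) (Finset.sum_nonneg fun j hj => ?_)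
  exact mul_nonneg (hx j (Finset.mem_range.1 hj)) (by positivity)

lemma circ_sub (n : ℕ) (x y : ℕ → ℝ) : circ n (fun j => x j - y j) = circ n x - circ n y := by
  ext a b
  simp only [Matrix.sub_apply, circ_apply, sub_mul, Finset.sum_sub_distrib, mul_sub]

open Matrix in
lemma circ_quad_le (n : ℕ) (hn : 0 < n) (x : ℕ → ℝ) (hx : ∀ j < n, x j ≤ 1) (v : Fin n → ℝ) :
    v ⬝ᵥ circ n x *ᵥ v ≤ v ⬝ᵥ v := by
  have := circ_quad n (fun j => 1 - x j) (fun j hj => sub_nonneg.2 (hx j hj)) v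
  rw [circ_sub n (fun _ => 1) x, circ_one n hn, sub_mulVec, dotProduct_sub, one_mulVec] at this
  linarith

lemma adj_dvd (n : ℕ) (hn : 1 < n) (a b : Fin n) : (SimpleGraph.cycleGraph n).Adj a b ↔
    ((n : ℤ) ∣ ((a : ℕ) : ℤ) - ((b : ℕ) : ℤ) - 1) ∨
    ((n : ℤ) ∣ ((a : ℕ) : ℤ) - ((b : ℕ) : ℤ) + 1) := by
  have key : ∀ a b : Fin n, (a - b).val = 1 ↔
      ((n : ℤ) ∣ ((a : ℕ) : ℤ) - ((b : ℕ) : ℤ) - 1) := by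
    intro a b
    have ha := a.2
    have hb := b.2
    rw [Fin.sub_def]
    simp only
    have h1 : 1 = 1 % n := (Nat.mod_eq_of_lt hn).symm
    conv_lhs => rhs; rw [h1]
    rw [eq_comm]
    change _ ≡ _ [MOD n] ↔ _
    rw [Nat.modEq_iff_dvd]
    rw [show (((n - (b : ℕ) + (a : ℕ) : ℕ) : ℤ) - ((1 : ℕ) : ℤ)) =
      ((a : ℕ) : ℤ) - ((b : ℕ) : ℤ) - 1 + n by omega]
    exact dvd_add_self_right
  rw [SimpleGraph.cycleGraph_adj', key, key]
  refine or_congr Iff.rfl ?_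
  rw [← dvd_neg]
  ring_nf

lemma cos_shift (n : ℕ) (hn : 0 < n) (j : ℕ) (d k : ℤ) :
    Real.cos (2 * Real.pi * j * (d + n * k : ℤ) / n) = Real.cos (2 * Real.pi * j * d / n) := by
  have hn0 : (n : ℝ) ≠ 0 := by positivity
  rw [← Real.cos_add_int_mul_two_pi (2 * Real.pi * j * d / n) (j * k)]
  congr 1
  push_cast
  field_simp

lemma circ_adj (n : ℕ) (hn : 1 < n) (x : ℕ → ℝ)
    (hx : ∑ j ∈ Finset.range n, x j * Real.cos (2 * Real.pi * j / n) = 0)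
    (a b : Fin n) (hab : (SimpleGraph.cycleGraph n).Adj a b) : circ n x a b = 0 := by
  rw [circ_apply]
  refine mul_eq_zero_of_right _ ?_
  rw [← hx]
  refine Finset.sum_congr rfl fun j _ => ?_
  congr 1
  rw [adj_dvd n hn] at hab
  rcases hab with ⟨k, hk⟩ | ⟨k, hk⟩
  · rw [show ((a : ℕ) : ℤ) - ((b : ℕ) : ℤ) = 1 + n * k by linarith, cos_shift n (by omega)]
    simp
  · rw [show ((a : ℕ) : ℤ) - ((b : ℕ) : ℤ) = -1 + n * k by linarith, cos_shift n (by omega),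
      ← Real.cos_neg]
    congr 1
    push_cast
    ring

/-- Lower bound from a spectrum. -/
lemma lower (n : ℕ) (hn : 1 < n) (k : ℕ) (hk : 1 ≤ k) (x : ℕ → ℝ) (h0 : ∀ j < n, 0 ≤ x j)
    (h1 : ∀ j < n, x j ≤ 1)
    (ht : ∑ j ∈ Finset.range n, x j = (min k n : ℕ))
    (hx : ∑ j ∈ Finset.range n, x j * Real.cos (2 * Real.pi * j / n) = 0)
    (A : Matrix (Fin n) (Fin n) ℝ) (hA : A.IsHermitian)
    (hAG : ∀ i j, ¬ (SimpleGraph.cycleGraph n).Adj i j → A i j = 1) :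
    n * x 0 ≤ sumKEig k A hA := by
  have h := trace_le_sumKEig k hk A hA (by simp; omega) (circ n x) (circ_quad n x h0)
    (circ_quad_le n (by omega) x h1) (by rw [circ_trace n (by omega), ht]; simp)
  refine le_trans (le_of_eq ?_) h
  rw [← circ_sum n (by omega) x]
  simp only [Matrix.trace, Matrix.diag, Matrix.mul_apply]
  have hsymm : ∀ a b, circ n x a b = circ n x b a := fun a b => by
    have := (circ_herm n x).apply a b
    simpa using this.symm
  refine Finset.sum_congr rfl fun a _ => Finset.sum_congr rfl fun b _ => ?_
  by_cases hab : (SimpleGraph.cycleGraph n).Adj a b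
  · rw [circ_adj n hn x hx b a hab.symm, circ_adj n hn x hx a b hab, mul_zero]
  · rw [hAG a b hab, one_mul, hsymm]

lemma bddBelow_aux (n : ℕ) (k : ℕ) (B : ℝ) (h : ∀ (A : Matrix (Fin n) (Fin n) ℝ)
      (hA : A.IsHermitian), (∀ i j, ¬ (SimpleGraph.cycleGraph n).Adj i j → A i j = 1) →
      B ≤ sumKEig k A hA) :
    BddBelow {x : ℝ | ∃ (A : Matrix (Fin n) (Fin n) ℝ) (hA : A.IsHermitian),
    (∀ i j, ¬ (SimpleGraph.cycleGraph n).Adj i j → A i j = 1) ∧ x = sumKEig k A hA} := by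
  refine ⟨B, ?_⟩
  rintro x ⟨A, hA, hAG, rfl⟩
  exact h A hA hAG

lemma ones_herm (n : ℕ) : (Matrix.of fun _ _ => (1 : ℝ) : Matrix (Fin n) (Fin n) ℝ).IsHermitian := by
  ext a b; simp

lemma le_gtheta_s7 (n : ℕ) (k : ℕ) (B : ℝ) (h : ∀ (A : Matrix (Fin n) (Fin n) ℝ)
      (hA : A.IsHermitian), (∀ i j, ¬ (SimpleGraph.cycleGraph n).Adj i j → A i j = 1) →
      B ≤ sumKEig k A hA) : B ≤ gtheta k (SimpleGraph.cycleGraph n) := by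
  refine le_csInf ⟨_, Matrix.of fun _ _ => 1, ones_herm n, ?_, rfl⟩ ?_
  · intro i j _; rfl
  · rintro x ⟨A, hA, hAG, rfl⟩
    exact h A hA hAG

open Matrix in
lemma sumKEig_ones (n k : ℕ) : sumKEig k _ (ones_herm n) ≤ n := by
  refine sumKEig_le _ _ _ _ fun s _ => ?_
  have htr := (ones_herm n).trace_eq_sum_eigenvalues
  simp only [Matrix.trace, Matrix.diag, Matrix.of_apply] at htr
  simp only [Finset.sum_const, Finset.card_univ, Fintype.card_fin, nsmul_eq_mul, mul_one] at htr
  have : (n : ℝ) = ∑ i, (ones_herm n).eigenvalues i := by simpa using htr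
  rw [this]
  refine Finset.sum_le_sum_of_subset_of_nonneg (Finset.subset_univ _) fun i _ _ => ?_
  obtain ⟨v, -, hv⟩ := eig_eq _ (ones_herm n) i
  rw [hv]
  have : v ⬝ᵥ (Matrix.of fun _ _ => (1 : ℝ) : Matrix (Fin n) (Fin n) ℝ) *ᵥ v = (∑ i, v i) ^ 2 := by
    simp [dotProduct, mulVec, sq, Finset.sum_mul]
  rw [this]
  positivity

/-- Three-valued spectrum. -/
noncomputable def spec3 (m : ℕ) (α β γ : ℝ) (j : ℕ) : ℝ :=
  if j = 0 then α else if j = m ∨ j = m + 1 then β else γ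

lemma spec3_sum (m : ℕ) (hm : 1 ≤ m) (α β γ : ℝ) (f : ℕ → ℝ) :
    ∑ j ∈ Finset.range (2 * m + 1), spec3 m α β γ j * f j =
      (α - γ) * f 0 + (β - γ) * (f m + f (m + 1)) +
        γ * ∑ j ∈ Finset.range (2 * m + 1), f j := by
  have h : ∀ j, spec3 m α β γ j * f j = (if j = 0 then (α - γ) * f 0 else 0) +
      (if j = m then (β - γ) * f m else 0) + (if j = m + 1 then (β - γ) * f (m + 1) else 0) +
      γ * f j := by
    intro j
    unfold spec3
    by_cases h0 : j = 0
    · subst h0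
      rw [if_pos rfl, if_pos rfl, if_neg (by omega), if_neg (by omega)]
      ring
    · by_cases h1 : j = m
      · subst h1
        rw [if_neg h0, if_pos (Or.inl rfl), if_neg h0, if_pos rfl, if_neg (by omega)]
        ring
      · by_cases h2 : j = m + 1
        · subst h2
          rw [if_neg h0, if_pos (Or.inr rfl), if_neg h0, if_pos rfl, if_neg (by omega)]
          ring
        · rw [if_neg h0, if_neg (by tauto), if_neg h0, if_neg h1, if_neg h2]
          ring
  rw [Finset.sum_congr rfl (fun j _ => h j)]
  rw [Finset.sum_add_distrib, Finset.sum_add_distrib, Finset.sum_add_distrib, ← Finset.mul_sum]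
  simp only [Finset.sum_ite_eq', Finset.mem_range]
  rw [if_pos (by omega), if_pos (by omega), if_pos (by omega)]
  ring

lemma spec3_total (m : ℕ) (hm : 1 ≤ m) (α β γ : ℝ) :
    ∑ j ∈ Finset.range (2 * m + 1), spec3 m α β γ j = α + 2 * β + (2 * m - 2) * γ := by
  have := spec3_sum m hm α β γ (fun _ => 1)
  simp only [mul_one, Finset.sum_const, Finset.card_range, nsmul_eq_mul] at this
  rw [this]
  push_cast
  ring

lemma spec3_cos (m : ℕ) (hm : 1 ≤ m) (α β γ : ℝ) :
    ∑ j ∈ Finset.range (2 * m + 1), spec3 m α β γ j *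
      Real.cos (2 * Real.pi * j / (2 * m + 1 : ℕ)) =
      (α - γ) - 2 * (β - γ) * Real.cos (Real.pi / (2 * m + 1 : ℕ)) := by
  rw [spec3_sum m hm α β γ (fun j => Real.cos (2 * Real.pi * j / (2 * m + 1 : ℕ)))]
  have hN : ((2 * m + 1 : ℕ) : ℝ) ≠ 0 := by positivity
  have h1 : Real.cos (2 * Real.pi * m / (2 * m + 1 : ℕ)) =
      - Real.cos (Real.pi / (2 * m + 1 : ℕ)) := by
    rw [← Real.cos_pi_sub]
    congr 1
    field_simp
    push_cast
    ring
  have h2 : Real.cos (2 * Real.pi * (m + 1 : ℕ) / (2 * m + 1 : ℕ)) =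
      - Real.cos (Real.pi / (2 * m + 1 : ℕ)) := by
    rw [← Real.cos_add_pi]
    congr 1
    field_simp
    push_cast
    ring
  have h3 := cos_sum_aux (2 * m + 1) (by omega) 1 0
  rw [if_neg (by
    intro h
    have := Int.eq_one_of_dvd_one (by positivity) h
    push_cast at this
    omega)] at h3
  simp only [Int.cast_one, mul_one, add_zero] at h3
  simp only [h1, h2, h3]
  simp
  ring

lemma cos_lower (m j : ℕ) (hj : j < 2 * m + 1) :
    - Real.cos (Real.pi / (2 * m + 1 : ℕ)) ≤ Real.cos (2 * Real.pi * j / (2 * m + 1 : ℕ)) := by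
  have hN : (0 : ℝ) < ((2 * m + 1 : ℕ) : ℝ) := by positivity
  have hpi := Real.pi_pos
  rw [neg_le, ← Real.cos_pi_sub, ← Real.cos_abs]
  have e : Real.pi - 2 * Real.pi * j / (2 * m + 1 : ℕ) =
      Real.pi / (2 * m + 1 : ℕ) * ((2 * m + 1 - 2 * j : ℤ) : ℝ) := by
    field_simp
    push_cast
    ring
  have h1 : (1 : ℝ) ≤ |((2 * m + 1 - 2 * j : ℤ) : ℝ)| := by
    rw [← Int.cast_abs]
    have : (1 : ℤ) ≤ |(2 * m + 1 - 2 * j : ℤ)| := Int.one_le_abs (by omega)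
    exact_mod_cast this
  have h2 : |((2 * m + 1 - 2 * j : ℤ) : ℝ)| ≤ ((2 * m + 1 : ℕ) : ℝ) := by
    rw [← Int.cast_abs]
    have : |(2 * m + 1 - 2 * j : ℤ)| ≤ ((2 * m + 1 : ℕ) : ℤ) := by rw [abs_le]; omega
    exact_mod_cast this
  have hq : 0 < Real.pi / ((2 * m + 1 : ℕ) : ℝ) := by positivity
  rw [e, abs_mul, abs_of_pos hq]
  refine Real.cos_le_cos_of_nonneg_of_le_pi hq.le ?_ ?_
  · calc _ ≤ Real.pi / ((2 * m + 1 : ℕ) : ℝ) * ((2 * m + 1 : ℕ) : ℝ) := by gcongr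
      _ = Real.pi := by field_simp
  · nlinarith

lemma upper_entry (n : ℕ) (hn : 1 < n) (v t : ℝ) (a b : Fin n)
    (hab : ¬ (SimpleGraph.cycleGraph n).Adj a b) :
    circ n (fun j => v - (if j = 0 then (n : ℝ) else 0) +
      2 * t * Real.cos (2 * Real.pi * j / n)) a b = (if a = b then v else 0) - 1 := by
  have hn0 : (n : ℝ) ≠ 0 := by positivity
  rw [adj_dvd n hn, not_or] at hab
  rw [circ_apply]
  set d : ℤ := ((a : ℕ) : ℤ) - ((b : ℕ) : ℤ) with hd
  have c0 := cos_sum_aux n (by omega) d 0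
  have c1 := cos_sum_aux n (by omega) (d - 1) 0
  have c2 := cos_sum_aux n (by omega) (d + 1) 0
  rw [if_neg hab.1] at c1
  rw [if_neg hab.2] at c2
  simp only [add_zero, Real.cos_zero, hd, dvd_val_sub] at c0
  simp only [add_zero] at c1 c2
  have h : ∀ j ∈ Finset.range n, (v - (if j = 0 then (n : ℝ) else 0) +
      2 * t * Real.cos (2 * Real.pi * j / n)) * Real.cos (2 * Real.pi * j * d / n) =
      v * Real.cos (2 * Real.pi * j * d / n) - (if j = 0 then (n : ℝ) else 0) +
      t * (Real.cos (2 * Real.pi * j * (d - 1 : ℤ) / n) +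
        Real.cos (2 * Real.pi * j * (d + 1 : ℤ) / n)) := by
    intro j _
    have e1 : 2 * Real.pi * j * (d - 1 : ℤ) / n =
      2 * Real.pi * j * d / n - 2 * Real.pi * j / n := by push_cast; ring
    have e2 : 2 * Real.pi * j * (d + 1 : ℤ) / n =
      2 * Real.pi * j * d / n + 2 * Real.pi * j / n := by push_cast; ring
    rw [e1, e2, Real.cos_sub, Real.cos_add]
    split_ifs with h0
    · subst h0; simp; ring
    · ring
  rw [Finset.sum_congr rfl h, Finset.sum_add_distrib, Finset.sum_sub_distrib,
    ← Finset.mul_sum, ← Finset.mul_sum, Finset.sum_add_distrib, c1, c2, c0]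
  simp only [Finset.sum_ite_eq', Finset.mem_range]
  rw [if_pos (show 0 < n by omega)]
  split_ifs <;> field_simp <;> ring

open Matrix in
lemma upper (m : ℕ) (hm : 1 ≤ m) (c : ℝ) (hc : c = Real.cos (Real.pi / (2 * m + 1 : ℕ)))
    (hc0 : 0 < c) :
    ∃ (A : Matrix (Fin (2 * m + 1)) (Fin (2 * m + 1)) ℝ) (hA : A.IsHermitian),
    (∀ i j, ¬ (SimpleGraph.cycleGraph (2 * m + 1)).Adj i j → A i j = 1) ∧
    sumKEig 1 A hA ≤ (2 * m + 1 : ℕ) * c / (1 + c) := by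
  set N : ℕ := 2 * m + 1 with hN
  set v : ℝ := N * c / (1 + c) with hv
  set t : ℝ := N / (2 * (1 + c)) with ht
  set l : ℕ → ℝ := (fun j => v - (if j = 0 then (N : ℝ) else 0) +
      2 * t * Real.cos (2 * Real.pi * j / N)) with hl
  have hl0 : ∀ j < N, 0 ≤ l j := by
    intro j hj
    simp only [hl]
    split_ifs with h
    · subst h
      simp only [hv, ht]
      apply le_of_eq
      simp
      field_simp
      ring
    · have h1 := cos_lower m j hj
      rw [← hN, ← hc] at h1
      have ht0 : 0 < t := by positivity
      have : v = 2 * t * c := by rw [hv, ht]; field_simp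
      rw [this]
      nlinarith
  have hA : (v • (1 : Matrix (Fin N) (Fin N) ℝ) - circ N l).IsHermitian := by
    refine Matrix.IsHermitian.sub ?_ (circ_herm N l)
    ext a b
    simp [Matrix.one_apply, eq_comm]
  refine ⟨_, hA, ?_, ?_⟩
  · intro a b hab
    rw [Matrix.sub_apply, upper_entry N (by omega) v t a b hab]
    simp [Matrix.one_apply]
  · refine sumKEig_le _ _ _ _ fun s hs => ?_
    have hs1 : s.card = 1 := by rw [hs]; simp; omega
    obtain ⟨i, rfl⟩ := Finset.card_eq_one.1 hs1
    rw [Finset.sum_singleton]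
    obtain ⟨u, hu, he⟩ := eig_eq _ hA i
    rw [he, sub_mulVec, dotProduct_sub, smul_mulVec, one_mulVec, dotProduct_smul, hu]
    have := circ_quad N l hl0 u
    simp
    exact this

lemma sumKEig_two_le (N : ℕ) (hN : 2 ≤ N) (A : Matrix (Fin N) (Fin N) ℝ) (hA : A.IsHermitian) :
    sumKEig 2 A hA ≤ 2 * sumKEig 1 A hA := by
  refine sumKEig_le _ _ _ _ fun s hs => ?_
  have hs2 : s.card = 2 := by rw [hs]; simp; omega
  have : ∀ i ∈ s, hA.eigenvalues i ≤ sumKEig 1 A hA := by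
    intro i _
    have := le_sumKEig 1 A hA {i} (by simp; omega)
    simpa using this
  have h := Finset.sum_le_card_nsmul s _ _ this
  rw [hs2] at h
  simpa using h

theorem stmt_7 (n : ℕ) (hodd : Odd n) (hn : 1 < n) :
    gtheta 2 (SimpleGraph.cycleGraph n) = 2 * gtheta 1 (SimpleGraph.cycleGraph n) ∧
    ∀ k : ℕ, 3 ≤ k → gtheta k (SimpleGraph.cycleGraph n) = (n : ℝ) := by
  obtain ⟨m, rfl⟩ := hodd
  have hm : 1 ≤ m := by omega
  obtain ⟨c, hc⟩ : ∃ c, c = Real.cos (Real.pi / (2 * m + 1 : ℕ)) := ⟨_, rfl⟩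
  have hc1 : c ≤ 1 := hc ▸ Real.cos_le_one _
  have hmr : (1 : ℝ) ≤ m := by exact_mod_cast hm
  have hch : 1 / 2 ≤ c := by
    rw [hc, ← Real.cos_pi_div_three]
    have hpi := Real.pi_pos
    refine Real.cos_le_cos_of_nonneg_of_le_pi (by positivity) (by linarith) ?_
    gcongr
    push_cast
    linarith
  have hc0 : 0 < c := by linarith
  have low2 : ∀ (A : Matrix (Fin (2 * m + 1)) (Fin (2 * m + 1)) ℝ) (hA : A.IsHermitian),
      (∀ i j, ¬ (SimpleGraph.cycleGraph (2 * m + 1)).Adj i j → A i j = 1) →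
      2 * ((2 * m + 1 : ℕ) * c / (1 + c)) ≤ sumKEig 2 A hA := by
    intro A hA hAG
    have h := lower (2 * m + 1) hn 2 (by omega)
      (spec3 m (2 * c / (1 + c)) (1 / (1 + c)) 0) ?_ ?_ ?_ ?_ A hA hAG
    · refine le_trans (le_of_eq ?_) h
      simp only [spec3, if_true]
      ring
    · intro j _
      unfold spec3
      split_ifs <;> positivity
    · intro j _
      unfold spec3
      split_ifs
      · rw [div_le_one (by positivity)]; linarith
      · rw [div_le_one (by positivity)]; linarith
      · norm_num
    · rw [spec3_total m hm, min_eq_left (by omega)]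
      field_simp
      push_cast
      ring
    · rw [spec3_cos m hm, ← hc]
      field_simp
      ring
  obtain ⟨A0, hA0, hAG0, hle0⟩ := upper m hm c hc hc0
  constructor
  · have bdd2 := bddBelow_aux _ 2 _ low2
    have low1 : ∀ (A : Matrix (Fin (2 * m + 1)) (Fin (2 * m + 1)) ℝ) (hA : A.IsHermitian),
      (∀ i j, ¬ (SimpleGraph.cycleGraph (2 * m + 1)).Adj i j → A i j = 1) →
      (2 * m + 1 : ℕ) * c / (1 + c) ≤ sumKEig 1 A hA := by
      intro A hA hAG
      have := low2 A hA hAG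
      have := sumKEig_two_le _ (by omega) A hA
      linarith
    have bdd1 := bddBelow_aux _ 1 _ low1
    have g1 : gtheta 1 (SimpleGraph.cycleGraph (2 * m + 1)) = (2 * m + 1 : ℕ) * c / (1 + c) :=
      le_antisymm ((csInf_le bdd1 ⟨A0, hA0, hAG0, rfl⟩).trans hle0) (le_gtheta_s7 _ _ _ low1)
    rw [g1]
    refine le_antisymm ((csInf_le bdd2 ⟨A0, hA0, hAG0, rfl⟩).trans ?_) (le_gtheta_s7 _ _ _ low2)
    have := sumKEig_two_le _ (by omega) A0 hA0
    linarith
  · intro k hk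
    have lowk : ∀ (A : Matrix (Fin (2 * m + 1)) (Fin (2 * m + 1)) ℝ) (hA : A.IsHermitian),
      (∀ i j, ¬ (SimpleGraph.cycleGraph (2 * m + 1)).Adj i j → A i j = 1) →
      ((2 * m + 1 : ℕ) : ℝ) ≤ sumKEig k A hA := by
      intro A hA hAG
      obtain ⟨K, hK⟩ : ∃ K, K = min k (2 * m + 1) := ⟨_, rfl⟩
      have hK3 : (3 : ℝ) ≤ K := by exact_mod_cast (show 3 ≤ K by omega)
      have hKn : (K : ℝ) ≤ 2 * m + 1 := by exact_mod_cast (show K ≤ 2 * m + 1 by omega)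
      obtain ⟨s, hs0, hs, hs1⟩ : ∃ s : ℝ, 0 ≤ s ∧ s * (4 * m * c - 2) = 2 * m + 1 - K ∧
          2 * s * c ≤ 1 := by
        by_cases hm1 : m = 1
        · subst hm1
          refine ⟨0, le_rfl, ?_, by simp⟩
          have : K = 3 := by omega
          rw [this]; norm_num
        · have hm2 : (2 : ℝ) ≤ m := by exact_mod_cast (show 2 ≤ m by omega)
          have hD : 0 < 4 * m * c - 2 := by nlinarith
          refine ⟨(2 * m + 1 - K) / (4 * m * c - 2), div_nonneg (by linarith) hD.le,
            div_mul_cancel₀ _ hD.ne', ?_⟩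
          rw [show 2 * ((2 * m + 1 - K) / (4 * m * c - 2)) * c =
            (2 * (2 * m + 1 - K) * c) / (4 * m * c - 2) by ring, div_le_one hD]
          nlinarith
      have h := lower (2 * m + 1) hn k (by omega)
        (spec3 m 1 (1 - s * (2 * c - 1)) (1 - 2 * s * c)) ?_ ?_ ?_ ?_ A hA hAG
      · refine le_trans (le_of_eq ?_) h
        simp [spec3]
      · intro j _
        unfold spec3
        split_ifs
        · norm_num
        · nlinarith
        · linarith
      · intro j _
        unfold spec3
        split_ifs
        · norm_num
        · nlinarith
        · nlinarith
      · rw [spec3_total m hm, ← hK]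
        linear_combination -hs
      · rw [spec3_cos m hm, ← hc]
        ring
    refine le_antisymm ?_ (le_gtheta_s7 _ _ _ lowk)
    refine (csInf_le (bddBelow_aux _ k _ lowk) ⟨_, ones_herm _, ?_, rfl⟩).trans (sumKEig_ones _ k)
    intro i j _; rfl
end
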